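/- Let R be a commutative noetherian ring and N a pure-injective R-module. Then {}^⊥N = {}^⊥(∏_m Hom_R(R_m, N)), where the product ranges over all maximal ideals m of R. Moreover, if {}^⊥N is a definable class of R-modules, then {}^⊥(Hom_R(R_m, N)) is a definable class of R_m-modules for each maximal ideal m. -/

import Mathlib

open CategoryTheory Opposite

noncomputable section

/-- Vanishing of the `n`-th Ext group of two `R`-modules. -/
def extV (R : Type) [Ring R] (M N : ModuleCat.{0} R) (n : ℕ) : Prop :=
  Subsingleton (((_root_.Ext ℤ (ModuleCat.{0} R) n).obj (op M)).obj N)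

/-- The class `{}^⊥𝒳 = {M ∣ Ext^i_R(M, X) = 0 for all i ≥ 1 and all X ∈ 𝒳}`. -/
def extPerpAll (R : Type) [Ring R] (𝒳 : Set (ModuleCat.{0} R)) : Set (ModuleCat.{0} R) :=
  {M | ∀ X ∈ 𝒳, ∀ i : ℕ, 1 ≤ i → extV R M X i}

/-- `f : A →ₗ[R] B` is a pure monomorphism. -/
def IsPureMono (R : Type) [CommRing R] {A B : Type} [AddCommGroup A] [Module R A]
    [AddCommGroup B] [Module R B] (f : A →ₗ[R] B) : Prop :=
  Function.Injective f ∧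
    ∀ (Q : Type) [AddCommGroup Q] [Module R Q], Function.Injective (LinearMap.lTensor Q f)

/-- An `R`-module `N` is pure-injective if it is injective with respect to
pure monomorphisms. -/
def PureInjective (R : Type) [CommRing R] (N : Type) [AddCommGroup N] [Module R N] : Prop :=
  ∀ (A B : Type) [AddCommGroup A] [Module R A] [AddCommGroup B] [Module R B]
    (f : A →ₗ[R] B), IsPureMono R f → ∀ g : A →ₗ[R] N, ∃ h : B →ₗ[R] N, h.comp f = g

/-- A class of modules is definable if it is closed under isomorphisms, products,
direct limits and pure submodules. -/
def IsDefinableClass (R : Type) [CommRing R] (𝒞 : Set (ModuleCat.{0} R)) : Prop :=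
  (∀ X Y : ModuleCat.{0} R, Nonempty (X ≅ Y) → X ∈ 𝒞 → Y ∈ 𝒞) ∧
  (∀ (ι : Type) (G : ι → ModuleCat.{0} R), (∀ i, G i ∈ 𝒞) →
      ModuleCat.of R (∀ i, ↥(G i)) ∈ 𝒞) ∧
  (∀ (ι : Type) [Preorder ι] [IsDirected ι (· ≤ ·)] [DecidableEq ι] [Nonempty ι]
      (G : ι → Type) [∀ i, AddCommGroup (G i)] [∀ i, Module R (G i)]
      (f : ∀ i j, i ≤ j → G i →ₗ[R] G j), DirectedSystem G (fun i j h => f i j h) →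
      (∀ i, ModuleCat.of R (G i) ∈ 𝒞) → ModuleCat.of R (Module.DirectLimit G f) ∈ 𝒞) ∧
  (∀ (A B : Type) [AddCommGroup A] [Module R A] [AddCommGroup B] [Module R B]
      (f : A →ₗ[R] B), IsPureMono R f → ModuleCat.of R B ∈ 𝒞 → ModuleCat.of R A ∈ 𝒞)

/-- The `R_S`-module structure on the colocalization `Hom_R(R_S, N)`,
given by `(x • f) (y) = f (x * y)`. -/
instance colocModule (R : Type) [CommRing R] (S : Submonoid R)
    (N : Type) [AddCommGroup N] [Module R N] :
    Module (Localization S) (Localization S →ₗ[R] N) where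
  smul x f := f.comp (LinearMap.mulLeft R x)
  one_smul f := LinearMap.ext fun a => by
    show f (1 * a) = f a
    rw [one_mul]
  mul_smul x y f := LinearMap.ext fun a => by
    show f (x * y * a) = f (y * (x * a))
    ring_nf
  smul_zero x := rfl
  smul_add x f g := rfl
  add_smul x y f := LinearMap.ext fun a => by
    show f ((x + y) * a) = f (x * a) + f (y * a)
    rw [add_mul, map_add]
  zero_smul f := LinearMap.ext fun a => by
    show f (0 * a) = 0
    rw [zero_mul, map_zero]

/-!
Write `N⋆` for the character module of `N`. A pure-injective `N` is a retract of `N⋆⋆`, and hence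
so are `Hom(K, N)` and the cokernels of the restriction maps `Hom(P, N) → Hom(K, N)`. For such a
retract `M`, maps from flat modules lift through `M → M / uM`, and if a multiplicative set `S` acts
surjectively on `M` then every element of `M` is the value at `1` of a map `R_S → M`. Over a
noetherian ring it follows, by noetherian induction on the annihilator, that `M = 0` as soon as
`Hom(R_𝔪, M) = 0` for all maximal `𝔪`. For `M = coker (Hom(P, N) → Hom(K, N))` this says that all
maps `K → N` extend to `P` if and only if all maps `K → Hom(R_𝔪, N)` do, and dimension shifting
turns this into the equality of the two classes.

For the second part, `Ext` from flat modules to `N` vanishes in positive degrees, so whether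
`Ext_R(X, N)` vanishes for an `R_S`-module `X` can be read off a resolution of `X` by free
`R_S`-modules, where it is the vanishing of `Ext_{R_S}(X, Hom_R(R_S, N))` by adjunction. Thus
`{}^⊥Hom_R(R_S, N)` is the preimage of `{}^⊥N` under restriction of scalars, which preserves
products, direct limits and pure monomorphisms.
-/

open scoped TensorProduct
open CategoryTheory.Abelian

section Ext

variable {A : Type} [Ring A]

theorem extV_succ_iff_of_projectiveResolution {X : ModuleCat.{0} A} (P : ProjectiveResolution X)
    (Y : ModuleCat.{0} A) (n : ℕ) :
    extV A X Y (n + 1) ↔ ∀ φ : P.complex.X (n + 1) ⟶ Y, P.complex.d (n + 2) (n + 1) ≫ φ = 0 →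
      ∃ ψ : P.complex.X n ⟶ Y, P.complex.d (n + 1) n ≫ ψ = φ := by
  unfold extV
  rw [← ModuleCat.isZero_iff_subsingleton, (P.isoExt (R := ℤ) (n + 1) Y).isZero_iff,
    ← HomologicalComplex.exactAt_iff_isZero_homology,
    HomologicalComplex.exactAt_iff' _ n (n + 1) (n + 2) (by simp) (by simp),
    ShortComplex.moduleCat_exact_iff]
  rfl

theorem extV_succ_iff_subsingleton_ext (X Y : ModuleCat.{0} A) (n : ℕ) :
    extV A X Y (n + 1) ↔ Subsingleton (Abelian.Ext X Y (n + 1)) := by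
  let P := projectiveResolution X
  rw [extV_succ_iff_of_projectiveResolution P, subsingleton_iff_forall_eq 0]
  constructor
  · intro h α
    obtain ⟨φ, hφ, rfl⟩ := P.extMk_surjective α (n + 2) rfl
    exact (P.extMk_eq_zero_iff φ _ rfl hφ n rfl).2 (h φ hφ)
  · exact fun h φ hφ ↦ (P.extMk_eq_zero_iff φ _ rfl hφ n rfl).1 (h _)

theorem extV_succ_of_projective (P Y : ModuleCat.{0} A) [Projective P] (n : ℕ) :
    extV A P Y (n + 1) :=
  (extV_succ_iff_subsingleton_ext P Y n).2
    (subsingleton_of_forall_eq 0 Abelian.Ext.eq_zero_of_projective)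

variable {K P X Y : Type} [AddCommGroup K] [Module A K] [AddCommGroup P] [Module A P]
  [AddCommGroup X] [Module A X] [AddCommGroup Y] [Module A Y] {i : K →ₗ[A] P} {π : P →ₗ[A] X}

theorem extV_one_iff_forall_exists_comp_eq (hi : Function.Injective i)
    (hex : Function.Exact i π) (hπ : Function.Surjective π)
    (hP : extV A (ModuleCat.of A P) (ModuleCat.of A Y) 1) :
    extV A (ModuleCat.of A X) (ModuleCat.of A Y) 1 ↔
      ∀ g : K →ₗ[A] Y, ∃ h : P →ₗ[A] Y, h ∘ₗ i = g := by
  have hS := ModuleCat.shortComplex_shortExact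
    (ModuleCat.shortComplexOfCompEqZero i π hex.linearMap_comp_eq_zero) hex hi hπ
  rw [extV_succ_iff_subsingleton_ext] at hP ⊢
  constructor
  · intro _ g
    obtain ⟨β, hβ⟩ := Ext.contravariant_sequence_exact₁ hS _ (Ext.mk₀ (ModuleCat.ofHom g))
      (add_zero 1) (Subsingleton.elim _ _)
    obtain ⟨h, rfl⟩ := (Ext.mk₀_bijective _ _).2 β
    rw [Ext.mk₀_comp_mk₀] at hβ
    exact ⟨h.hom, congrArg ModuleCat.Hom.hom ((Ext.mk₀_bijective _ _).1 hβ)⟩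
  · intro exists_extension
    refine subsingleton_of_forall_eq 0 fun α ↦ ?_
    obtain ⟨β, rfl⟩ := Ext.contravariant_sequence_exact₃ hS _ α (Subsingleton.elim _ _)
      (add_zero 1)
    obtain ⟨g, rfl⟩ := (Ext.mk₀_bijective _ _).2 β
    obtain ⟨h, hg⟩ := exists_extension g.hom
    have hg : g = ModuleCat.ofHom i ≫ ModuleCat.ofHom h := ModuleCat.hom_ext hg.symm
    rw [hg, ← Ext.mk₀_comp_mk₀]
    exact hS.extClass_comp_assoc _

theorem extV_add_two_iff_extV_succ (hi : Function.Injective i) (hex : Function.Exact i π)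
    (hπ : Function.Surjective π)
    (hP : ∀ n, extV A (ModuleCat.of A P) (ModuleCat.of A Y) (n + 1)) (n : ℕ) :
    extV A (ModuleCat.of A X) (ModuleCat.of A Y) (n + 2) ↔
      extV A (ModuleCat.of A K) (ModuleCat.of A Y) (n + 1) := by
  have hS := ModuleCat.shortComplex_shortExact
    (ModuleCat.shortComplexOfCompEqZero i π hex.linearMap_comp_eq_zero) hex hi hπ
  simp only [extV_succ_iff_subsingleton_ext] at hP ⊢
  have bijective_precomp : Function.Bijective
      (hS.extClass.precomp (ModuleCat.of A Y) (add_comm 1 (n + 1))) := by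
    refine ⟨(injective_iff_map_eq_zero _).2 fun α hα ↦ ?_, fun α ↦ ?_⟩
    · obtain ⟨β, rfl⟩ := Ext.contravariant_sequence_exact₁ hS _ α (add_comm 1 (n + 1)) hα
      rw [Subsingleton.elim β 0, Ext.comp_zero]
    · exact Ext.contravariant_sequence_exact₃ hS _ α (Subsingleton.elim _ _)
        (add_comm 1 (n + 1))
  exact (Equiv.ofBijective _ bijective_precomp).subsingleton_congr.symm

variable (A X) in
/-- The free module on the underlying set of `X`, mapping onto `X`: the first step of a free
resolution. -/
abbrev freeCover : (X →₀ A) →ₗ[A] X :=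
  Finsupp.linearCombination A id

theorem exact_subtype_freeCover :
    Function.Exact (LinearMap.ker (freeCover A X)).subtype (freeCover A X) :=
  LinearMap.exact_subtype_ker_map _

theorem extV_one_iff_forall_ker_freeCover :
    extV A (ModuleCat.of A X) (ModuleCat.of A Y) 1 ↔
      ∀ g : LinearMap.ker (freeCover A X) →ₗ[A] Y, ∃ h : (X →₀ A) →ₗ[A] Y,
        h ∘ₗ (LinearMap.ker (freeCover A X)).subtype = g :=
  extV_one_iff_forall_exists_comp_eq (Submodule.injective_subtype _) exact_subtype_freeCover
    (Finsupp.linearCombination_id_surjective A X)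
    (extV_succ_of_projective (ModuleCat.of A (X →₀ A)) _ 0)

theorem extV_add_two_iff_ker_freeCover (n : ℕ) :
    extV A (ModuleCat.of A X) (ModuleCat.of A Y) (n + 2) ↔
      extV A (ModuleCat.of A (LinearMap.ker (freeCover A X))) (ModuleCat.of A Y) (n + 1) := by
  refine extV_add_two_iff_extV_succ (P := X →₀ A) (Submodule.injective_subtype _)
    exact_subtype_freeCover (Finsupp.linearCombination_id_surjective A X) (fun n ↦ ?_) n
  exact extV_succ_of_projective _ _ n

theorem extV_succ_congr_right {Z : Type} [AddCommGroup Z] [Module A Z]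
    (H : ∀ (K P : Type) [AddCommGroup K] [Module A K] [AddCommGroup P] [Module A P]
      (j : K →ₗ[A] P), (∀ g : K →ₗ[A] Y, ∃ h : P →ₗ[A] Y, h ∘ₗ j = g) ↔
        ∀ g : K →ₗ[A] Z, ∃ h : P →ₗ[A] Z, h ∘ₗ j = g)
    (X : Type) [AddCommGroup X] [Module A X] (n : ℕ) :
    extV A (ModuleCat.of A X) (ModuleCat.of A Y) (n + 1) ↔
      extV A (ModuleCat.of A X) (ModuleCat.of A Z) (n + 1) := by
  induction n generalizing X with
  | zero =>
    exact extV_one_iff_forall_ker_freeCover.trans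
      ((H _ _ (Submodule.subtype _)).trans extV_one_iff_forall_ker_freeCover.symm)
  | succ n ih =>
    rw [extV_add_two_iff_ker_freeCover, extV_add_two_iff_ker_freeCover, ih]

theorem mem_extPerpAll_singleton {X Y : ModuleCat.{0} A} :
    X ∈ extPerpAll A {Y} ↔ ∀ n, extV A X Y (n + 1) := by
  refine ⟨fun h n ↦ h Y rfl _ n.succ_pos, ?_⟩
  rintro h _ rfl (_ | n) hn
  · exact absurd hn (by decide)
  · exact h n

end Ext

section Bidual

open CharacterModule

variable {R : Type*} [CommRing R]
variable {K : Type*} [AddCommGroup K] [Module R K] {L : Type*} [AddCommGroup L] [Module R L]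
  {M : Type*} [AddCommGroup M] [Module R M] {N : Type*} [AddCommGroup N] [Module R N]

theorem exact_dual {f : K →ₗ[R] L} {g : L →ₗ[R] M} (h : Function.Exact f g) :
    Function.Exact (dual g) (dual f) := by
  refine LinearMap.exact_of_comp_eq_zero_of_ker_le_range ?_ fun χ hχ ↦ ?_
  · rw [← dual_comp, h.linearMap_comp_eq_zero, dual_zero]
  · have hle : g.rangeRestrict.toAddMonoidHom.ker ≤ AddMonoidHom.ker (χ : L →+ _) := by
      intro x hx
      obtain ⟨y, rfl⟩ := (h x).1 (congrArg Subtype.val hx)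
      exact DFunLike.congr_fun hχ y
    let χ₀ : CharacterModule (LinearMap.range g) :=
      AddMonoidHom.liftOfSurjective g.rangeRestrict.toAddMonoidHom
        g.surjective_rangeRestrict ⟨χ, hle⟩
    obtain ⟨χ', hχ'⟩ := dual_surjective_of_injective _ (Submodule.injective_subtype _) χ₀
    refine ⟨χ', CharacterModule.ext L fun x ↦ ?_⟩
    calc χ' (g x) = χ₀ (g.rangeRestrict x) := DFunLike.congr_fun hχ' (g.rangeRestrict x)
      _ = χ x := AddMonoidHom.liftOfRightInverse_comp_apply _ _ _ ⟨χ, hle⟩ x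

variable (N) in
/-- The double dual `N⋆⋆` of `N` with respect to the character module `N⋆ = Hom_ℤ(N, ℚ/ℤ)`. -/
abbrev Bidual : Type _ :=
  CharacterModule (CharacterModule N)

variable (R N) in
/-- The evaluation map `N → N⋆⋆`. -/
def toBidual : N →ₗ[R] Bidual N where
  toFun x :=
    { toFun := fun χ ↦ χ x
      map_zero' := rfl
      map_add' := fun _ _ ↦ rfl }
  map_add' x y := DFunLike.ext _ _ fun χ : CharacterModule N ↦ map_add χ x y
  map_smul' _ _ := rfl

theorem rTensor_toBidual_injective (Q : Type*) [AddCommGroup Q] [Module R Q] :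
    Function.Injective ((toBidual R N).rTensor Q) :=
  rTensor_injective_iff_lcomp_surjective.2 fun g ↦ ⟨dual (dual g ∘ₗ toBidual R Q), rfl⟩

theorem toBidual_injective : Function.Injective (toBidual R N) :=
  (injective_iff_map_eq_zero _).2 fun _ hx ↦
    eq_zero_of_character_apply fun χ ↦ DFunLike.congr_fun hx χ

variable (R N) in
/-- `N` is a direct summand of its double dual along the evaluation map. This is a
universe-independent form of pure-injectivity. -/
def IsBidualRetract : Prop :=
  ∃ ρ : Bidual N →ₗ[R] N, ρ ∘ₗ toBidual R N = LinearMap.id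

/-- `f` is a retract, in the category of arrows, of its double dual along the evaluation maps. -/
def IsBidualRetractHom (f : M →ₗ[R] N) : Prop :=
  ∃ (ρ : Bidual M →ₗ[R] M) (σ : Bidual N →ₗ[R] N), ρ ∘ₗ toBidual R M = LinearMap.id ∧
    σ ∘ₗ toBidual R N = LinearMap.id ∧ f ∘ₗ ρ = σ ∘ₗ dual (dual f)

theorem IsBidualRetractHom.isBidualRetract_codomain {f : M →ₗ[R] N}
    (hf : IsBidualRetractHom f) : IsBidualRetract R N :=
  let ⟨_, σ, _, hσ, _⟩ := hf
  ⟨σ, hσ⟩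

theorem IsBidualRetract.lsmul (hN : IsBidualRetract R N) (r : R) :
    IsBidualRetractHom (LinearMap.lsmul R N r) := by
  obtain ⟨ρ, hρ⟩ := hN
  exact ⟨ρ, ρ, hρ, hρ, LinearMap.ext fun ξ ↦ (map_smul ρ r ξ).symm⟩

/-- The retraction of `Hom(K, N)⋆⋆` onto `Hom(K, N)` induced by a retraction `ρ` of `N⋆⋆` onto `N`.
It factors through `Hom(K, N⋆⋆) = (K ⊗ N⋆)⋆`, a retract of its own double dual. -/
def homRetraction (K : Type*) [AddCommGroup K] [Module R K] (ρ : Bidual N →ₗ[R] N) :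
    Bidual (K →ₗ[R] N) →ₗ[R] K →ₗ[R] N :=
  ρ.compRight R ∘ₗ curry ∘ₗ dual (toBidual R (K ⊗[R] CharacterModule N)) ∘ₗ
    dual (dual (uncurry ∘ₗ (toBidual R N).compRight R))

theorem homRetraction_comp_toBidual {ρ : Bidual N →ₗ[R] N}
    (hρ : ρ ∘ₗ toBidual R N = LinearMap.id) :
    homRetraction K ρ ∘ₗ toBidual R (K →ₗ[R] N) = LinearMap.id :=
  LinearMap.ext fun f ↦ LinearMap.ext fun x ↦ LinearMap.congr_fun hρ (f x)

theorem IsBidualRetract.lcomp (hN : IsBidualRetract R N) (j : K →ₗ[R] L) :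
    IsBidualRetractHom (LinearMap.lcomp R N j) := by
  obtain ⟨ρ, hρ⟩ := hN
  exact ⟨homRetraction L ρ, homRetraction K ρ, homRetraction_comp_toBidual hρ,
    homRetraction_comp_toBidual hρ, rfl⟩

theorem IsBidualRetractHom.mkQ_range {f : M →ₗ[R] N} (hf : IsBidualRetractHom f) :
    IsBidualRetractHom (LinearMap.range f).mkQ := by
  obtain ⟨ρ, σ, -, hσ, hfρ⟩ := hf
  let q := (LinearMap.range f).mkQ
  have exact_bidual : Function.Exact (dual (dual f)) (dual (dual q)) :=
    exact_dual (exact_dual f.exact_map_mkQ_range)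
  have surjective_bidual : Function.Surjective (dual (dual q)) :=
    dual_surjective_of_injective _ (dual_injective_of_surjective _ (Submodule.mkQ_surjective _))
  have hle : LinearMap.range (dual (dual f)) ≤ LinearMap.ker (q ∘ₗ σ) := by
    rintro _ ⟨ξ, rfl⟩
    rw [LinearMap.mem_ker, LinearMap.comp_apply, ← LinearMap.comp_apply σ, ← hfρ]
    exact (Submodule.Quotient.mk_eq_zero _).2 ⟨ρ ξ, rfl⟩
  let e := exact_bidual.linearEquivOfSurjective surjective_bidual
  let τ : Bidual (N ⧸ LinearMap.range f) →ₗ[R] N ⧸ LinearMap.range f :=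
    (LinearMap.range (dual (dual f))).liftQ (q ∘ₗ σ) hle ∘ₗ e.symm
  have hτ : q ∘ₗ σ = τ ∘ₗ dual (dual q) := by
    refine LinearMap.ext fun ξ ↦ ?_
    have : e.symm (dual (dual q) ξ) = Submodule.Quotient.mk ξ := e.symm_apply_eq.2 rfl
    simp only [τ, LinearMap.comp_apply, LinearEquiv.coe_coe, this, Submodule.liftQ_apply]
  refine ⟨σ, τ, hσ, Submodule.linearMap_qext _ ?_, hτ⟩
  calc (τ ∘ₗ toBidual R _) ∘ₗ q = (τ ∘ₗ dual (dual q)) ∘ₗ toBidual R N := rfl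
    _ = q := by rw [← hτ, LinearMap.comp_assoc, hσ, LinearMap.comp_id]

section Flat

variable (F : Type*) [AddCommGroup F] [Module R F] [Module.Flat R F]

theorem exists_dual_comp_eq_of_flat {t : K →ₗ[R] L} (φ : F →ₗ[R] CharacterModule K)
    (hφ : ∀ x, φ x ∈ LinearMap.range (dual t)) :
    ∃ ψ : F →ₗ[R] CharacterModule L, dual t ∘ₗ ψ = φ := by
  have hker : dual ((LinearMap.ker t).subtype.lTensor F) (uncurry φ) = 0 := by
    refine CharacterModule.ext _ fun z ↦ ?_
    induction z with
    | zero => rfl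
    | add y z hy hz => rw [map_add, hy, hz, map_add]
    | tmul x k =>
      obtain ⟨c, hc⟩ := hφ x
      calc φ x k = c (t k) := (DFunLike.congr_fun hc k.1).symm
        _ = 0 := by rw [k.2, map_zero]
  obtain ⟨χ, hχ⟩ :=
    (exact_dual (Module.Flat.lTensor_exact F (LinearMap.exact_subtype_ker_map t)) _).1 hker
  exact ⟨curry χ, LinearMap.ext fun x ↦ CharacterModule.ext _ fun k ↦
    DFunLike.congr_fun hχ (x ⊗ₜ k)⟩

namespace IsBidualRetractHom

variable {f : M →ₗ[R] N}

theorem exists_comp_eq_of_flat (hf : IsBidualRetractHom f) (φ : F →ₗ[R] N)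
    (hφ : ∀ x, φ x ∈ LinearMap.range f) : ∃ ψ : F →ₗ[R] M, f ∘ₗ ψ = φ := by
  obtain ⟨ρ, σ, -, hσ, hfρ⟩ := hf
  obtain ⟨ψ, hψ⟩ := exists_dual_comp_eq_of_flat F (t := dual f) (toBidual R N ∘ₗ φ) fun x ↦ by
    obtain ⟨y, hy⟩ := hφ x
    exact ⟨toBidual R M y, congrArg (toBidual R N) hy⟩
  refine ⟨ρ ∘ₗ ψ, ?_⟩
  rw [← LinearMap.comp_assoc, hfρ, LinearMap.comp_assoc, hψ, ← LinearMap.comp_assoc, hσ,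
    LinearMap.id_comp]

theorem subsingleton_hom_quotient_range_iff (hf : IsBidualRetractHom f) :
    Subsingleton (F →ₗ[R] N ⧸ LinearMap.range f) ↔
      ∀ φ : F →ₗ[R] N, ∃ ψ : F →ₗ[R] M, f ∘ₗ ψ = φ := by
  constructor
  · intro _ φ
    refine hf.exists_comp_eq_of_flat F φ fun x ↦ (Submodule.Quotient.mk_eq_zero _).1 ?_
    exact LinearMap.congr_fun (Subsingleton.elim ((LinearMap.range f).mkQ ∘ₗ φ) 0) x
  · refine fun lift ↦ subsingleton_of_forall_eq 0 fun χ ↦ ?_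
    obtain ⟨φ, rfl⟩ := hf.mkQ_range.exists_comp_eq_of_flat F χ fun x ↦ by
      rw [Submodule.range_mkQ]; exact Submodule.mem_top
    obtain ⟨ψ, rfl⟩ := lift φ
    rw [← LinearMap.comp_assoc, f.range_mkQ_comp, LinearMap.zero_comp]

end IsBidualRetractHom

end Flat

end Bidual

section Colocalization

open CharacterModule

variable {R : Type*} [CommRing R] {M : Type*} [AddCommGroup M] [Module R M]

theorem mk_one_localization_injective (S : Submonoid R)
    (h : ∀ s ∈ S, Function.Injective (LinearMap.lsmul R M s)) :
    Function.Injective (TensorProduct.mk R (Localization S) M 1) := by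
  have : IsLocalizedModule S (TensorProduct.mk R (Localization S) M 1) :=
    (isLocalizedModule_iff_isBaseChange S (Localization S) _).2 (TensorProduct.isBaseChange R M _)
  refine (injective_iff_map_eq_zero _).2 fun x hx ↦ ?_
  obtain ⟨s, hs⟩ := (IsLocalizedModule.eq_zero_iff S _).1 hx
  exact (injective_iff_map_eq_zero _).1 (h s s.2) x hs

theorem IsBidualRetract.exists_apply_one_eq (hM : IsBidualRetract R M) (S : Submonoid R)
    (h : ∀ s ∈ S, Function.Surjective (LinearMap.lsmul R M s)) (x : M) :
    ∃ φ : Localization S →ₗ[R] M, φ 1 = x := by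
  obtain ⟨ρ, hρ⟩ := hM
  have injective_dual : ∀ s ∈ S, Function.Injective (LinearMap.lsmul R (CharacterModule M) s) :=
    fun s hs ↦ dual_injective_of_surjective _ (h s hs)
  obtain ⟨χ, hχ⟩ := dual_surjective_of_injective _
    (mk_one_localization_injective S injective_dual) (toBidual R M x)
  refine ⟨ρ ∘ₗ curry χ, ?_⟩
  calc ρ (curry χ 1) = ρ (toBidual R M x) := congrArg ρ hχ
    _ = x := LinearMap.congr_fun hρ x

theorem IsBidualRetract.exists_lsmul_not_surjective [Nontrivial M] (hM : IsBidualRetract R M)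
    (h : ∀ m : MaximalSpectrum R, Subsingleton (Localization.AtPrime m.asIdeal →ₗ[R] M)) :
    ∃ u ∉ Module.annihilator R M, ¬ Function.Surjective (LinearMap.lsmul R M u) := by
  by_contra! surjective_lsmul
  obtain ⟨m, hm, hle⟩ := Ideal.exists_le_maximal (Module.annihilator R M)
    (mt Module.annihilator_eq_top_iff.1 (not_subsingleton M))
  obtain ⟨x, hx⟩ := exists_ne (0 : M)
  obtain ⟨φ, rfl⟩ := hM.exists_apply_one_eq m.primeCompl
    (fun s hs ↦ surjective_lsmul s (mt (@hle s) hs)) x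
  have := h ⟨m, hm⟩
  exact hx (LinearMap.congr_fun (Subsingleton.elim φ 0) 1)

theorem annihilator_lt_annihilator_quotient_range_lsmul {u : R} (hu : u ∉ Module.annihilator R M) :
    Module.annihilator R M <
      Module.annihilator R (M ⧸ LinearMap.range (LinearMap.lsmul R M u)) := by
  refine lt_of_le_not_ge (LinearMap.annihilator_le_of_surjective _ (Submodule.mkQ_surjective _))
    fun hle ↦ hu (hle (Module.mem_annihilator.2 fun y ↦ ?_))
  obtain ⟨x, rfl⟩ := Submodule.mkQ_surjective _ y
  exact (Submodule.Quotient.mk_eq_zero _).2 ⟨x, rfl⟩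

theorem IsBidualRetract.subsingleton_of_hom_atPrime [IsNoetherianRing R]
    (hM : IsBidualRetract R M)
    (h : ∀ m : MaximalSpectrum R, Subsingleton (Localization.AtPrime m.asIdeal →ₗ[R] M)) :
    Subsingleton M := by
  induction hI : Module.annihilator R M using WellFoundedGT.induction generalizing M with
  | ind I ih =>
    subst hI
    by_contra! nontrivial
    obtain ⟨u, hu, not_surjective⟩ := hM.exists_lsmul_not_surjective h
    have : Subsingleton (M ⧸ LinearMap.range (LinearMap.lsmul R M u)) := by
      refine ih _ (annihilator_lt_annihilator_quotient_range_lsmul hu) ?_ (fun m ↦ ?_) rfl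
      · exact (hM.lsmul u).mkQ_range.isBidualRetract_codomain
      · have := h m
        exact ((hM.lsmul u).subsingleton_hom_quotient_range_iff _).2
          fun _ ↦ ⟨0, Subsingleton.elim _ _⟩
    exact not_surjective
      (LinearMap.range_eq_top.1 (Submodule.Quotient.subsingleton_iff.1 this))

end Colocalization

section Extension

variable {R : Type*} [CommRing R] {K : Type*} [AddCommGroup K] [Module R K]
  {P : Type*} [AddCommGroup P] [Module R P] {N : Type*} [AddCommGroup N] [Module R N]
  {j : K →ₗ[R] P}

theorem forall_exists_comp_eq_iff_subsingleton :
    (∀ g : K →ₗ[R] N, ∃ h : P →ₗ[R] N, h ∘ₗ j = g) ↔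
      Subsingleton ((K →ₗ[R] N) ⧸ LinearMap.range (LinearMap.lcomp R N j)) :=
  (LinearMap.range_eq_top (f := LinearMap.lcomp R N j)).symm.trans
    Submodule.Quotient.subsingleton_iff.symm

theorem forall_exists_comp_eq_pi_iff {ι : Type*} {Y : ι → Type*} [∀ i, AddCommGroup (Y i)]
    [∀ i, Module R (Y i)] :
    (∀ g : K →ₗ[R] (∀ i, Y i), ∃ h : P →ₗ[R] (∀ i, Y i), h ∘ₗ j = g) ↔
      ∀ i, ∀ g : K →ₗ[R] Y i, ∃ h : P →ₗ[R] Y i, h ∘ₗ j = g := by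
  classical
  constructor
  · intro H i g
    obtain ⟨h, hg⟩ := H (LinearMap.single R Y i ∘ₗ g)
    refine ⟨LinearMap.proj i ∘ₗ h, ?_⟩
    rw [LinearMap.comp_assoc, hg, ← LinearMap.comp_assoc, LinearMap.proj_comp_single_same,
      LinearMap.id_comp]
  · intro H g
    choose h hg using fun i ↦ H i (LinearMap.proj i ∘ₗ g)
    exact ⟨LinearMap.pi h, LinearMap.ext fun x ↦ funext fun i ↦ LinearMap.congr_fun (hg i) x⟩

theorem IsBidualRetract.subsingleton_hom_quotient_range_lcomp_iff (hN : IsBidualRetract R N)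
    (F : Type*) [AddCommGroup F] [Module R F] [Module.Flat R F] :
    Subsingleton (F →ₗ[R] (K →ₗ[R] N) ⧸ LinearMap.range (LinearMap.lcomp R N j)) ↔
      ∀ g : K →ₗ[R] F →ₗ[R] N, ∃ h : P →ₗ[R] F →ₗ[R] N, h ∘ₗ j = g := by
  rw [(hN.lcomp j).subsingleton_hom_quotient_range_iff F]
  constructor
  all_goals
    intro H g
    obtain ⟨h, hg⟩ := H g.flip
    exact ⟨h.flip, LinearMap.ext₂ fun x y ↦ LinearMap.congr_fun₂ hg y x⟩

theorem IsBidualRetract.forall_exists_comp_eq_iff_atPrime [IsNoetherianRing R]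
    (hN : IsBidualRetract R N) :
    (∀ g : K →ₗ[R] N, ∃ h : P →ₗ[R] N, h ∘ₗ j = g) ↔
      ∀ m : MaximalSpectrum R, ∀ g : K →ₗ[R] Localization.AtPrime m.asIdeal →ₗ[R] N,
        ∃ h : P →ₗ[R] Localization.AtPrime m.asIdeal →ₗ[R] N, h ∘ₗ j = g := by
  simp_rw [forall_exists_comp_eq_iff_subsingleton (N := N),
    ← hN.subsingleton_hom_quotient_range_lcomp_iff]
  exact ⟨fun _ _ ↦ inferInstance,
    (hN.lcomp j).mkQ_range.isBidualRetract_codomain.subsingleton_of_hom_atPrime⟩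

end Extension

section PureInjective

variable {R : Type} [CommRing R] {N : Type} [AddCommGroup N] [Module R N]

theorem PureInjective.isBidualRetract (hN : PureInjective R N) : IsBidualRetract R N :=
  hN N (Bidual N) (toBidual R N) ⟨toBidual_injective, fun Q _ _ ↦
    (LinearMap.lTensor_inj_iff_rTensor_inj _ _).2 (rTensor_toBidual_injective Q)⟩ LinearMap.id

theorem extPerpAll_eq_extPerpAll_pi_atPrime [IsNoetherianRing R] (hN : PureInjective R N) :
    extPerpAll R {ModuleCat.of R N} =
      extPerpAll R {ModuleCat.of R (∀ m : {m : PrimeSpectrum R // m.asIdeal.IsMaximal},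
        Localization.AtPrime m.1.asIdeal →ₗ[R] N)} := by
  ext X
  rw [mem_extPerpAll_singleton, mem_extPerpAll_singleton]
  refine forall_congr' (extV_succ_congr_right (fun K P _ _ _ _ j ↦ ?_) X)
  rw [forall_exists_comp_eq_pi_iff, hN.isBidualRetract.forall_exists_comp_eq_iff_atPrime]
  exact ⟨fun h m ↦ h ⟨m.1.asIdeal, m.2⟩, fun h m ↦ h ⟨m.toPrimeSpectrum, m.isMaximal⟩⟩

variable {F : Type} [AddCommGroup F] [Module R F] [Module.Flat R F]

theorem isPureMono_ker_freeCover :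
    IsPureMono R (A := LinearMap.ker (freeCover R F)) (B := F →₀ R) (Submodule.subtype _) :=
  ⟨Submodule.injective_subtype _, fun Q _ _ ↦
    LinearMap.lTensor_injective_of_exact_of_flat (freeCover R F)
      (Finsupp.linearCombination_id_surjective R F) _ (Submodule.injective_subtype _)
      exact_subtype_freeCover Q⟩

theorem IsPureMono.flat {K : Type} [AddCommGroup K] [Module R K] {i : K →ₗ[R] F}
    (hi : IsPureMono R i) : Module.Flat R K := by
  refine Module.Flat.iff_rTensor_preserves_injective_linearMap.2 fun Q Q' _ _ _ _ f hf ↦ ?_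
  refine Function.Injective.of_comp (f := i.lTensor Q') ?_
  rw [← LinearMap.coe_comp, LinearMap.lTensor_comp_rTensor, ← LinearMap.rTensor_comp_lTensor]
  exact (Module.Flat.rTensor_preserves_injective_linearMap f hf).comp (hi.2 Q)

theorem PureInjective.extV_succ_of_flat (hN : PureInjective R N) (n : ℕ) :
    extV R (ModuleCat.of R F) (ModuleCat.of R N) (n + 1) := by
  induction n generalizing F with
  | zero => exact extV_one_iff_forall_ker_freeCover.2 (hN _ _ _ isPureMono_ker_freeCover)
  | succ n ih =>
    have := (isPureMono_ker_freeCover (R := R) (F := F)).flat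
    exact (extV_add_two_iff_ker_freeCover n).2 ih

end PureInjective

section RestrictScalars

variable {R T : Type} [CommRing R] [CommRing T] [Algebra R T]

theorem IsPureMono.restrictScalars {A B : Type} [AddCommGroup A] [Module T A] [Module R A]
    [IsScalarTower R T A] [AddCommGroup B] [Module T B] [Module R B] [IsScalarTower R T B]
    {f : A →ₗ[T] B} (hf : IsPureMono T f) : IsPureMono R (f.restrictScalars R) := by
  refine ⟨hf.1, fun Q _ _ ↦ (LinearMap.lTensor_inj_iff_rTensor_inj _ _).2 ?_⟩
  let eA := TensorProduct.AlgebraTensorModule.cancelBaseChange R T T A Q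
  let eB := TensorProduct.AlgebraTensorModule.cancelBaseChange R T T B Q
  have commutes (z : A ⊗[R] Q) :
      (f.restrictScalars R).rTensor Q z = eB (f.rTensor (T ⊗[R] Q) (eA.symm z)) := by
    induction z with
    | zero => simp only [map_zero]
    | add y z hy hz => simp only [map_add, hy, hz]
    | tmul a q => exact congrArg (· ⊗ₜ q) (one_smul T (f a)).symm
  have injective_rTensor := (LinearMap.lTensor_inj_iff_rTensor_inj _ _).1 (hf.2 (T ⊗[R] Q))
  rw [funext commutes]
  exact eB.injective.comp (injective_rTensor.comp eA.symm.injective)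

section DirectLimit

variable {ι : Type} [Preorder ι] [DecidableEq ι]
  {G : ι → Type} [∀ i, AddCommGroup (G i)] [∀ i, Module R (G i)] [∀ i, Module T (G i)]
  [∀ i, IsScalarTower R T (G i)] (f : ∀ i j, i ≤ j → G i →ₗ[T] G j)
  [Module R (Module.DirectLimit G f)] [IsScalarTower R T (Module.DirectLimit G f)]

/-- The comparison map from the direct limit of the underlying `R`-modules to the direct limit of
a system of `T`-modules. -/
def directLimitRestrictScalarsHom :
    Module.DirectLimit G (fun i j h ↦ (f i j h).restrictScalars R) →ₗ[R] Module.DirectLimit G f :=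
  Module.DirectLimit.lift R ι G _ (fun i ↦ (Module.DirectLimit.of T ι G f i).restrictScalars R)
    fun _ _ _ _ ↦ Module.DirectLimit.of_f

theorem directLimitRestrictScalarsHom_of (i : ι) (x : G i) :
    directLimitRestrictScalarsHom f (Module.DirectLimit.of R ι G _ i x) =
      Module.DirectLimit.of T ι G f i x :=
  Module.DirectLimit.lift_of _ _ _

theorem directLimitRestrictScalarsHom_bijective [IsDirected ι (· ≤ ·)] [Nonempty ι]
    [DirectedSystem G fun i j h ↦ f i j h] :
    Function.Bijective (directLimitRestrictScalarsHom (R := R) f) := by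
  refine ⟨(injective_iff_map_eq_zero _).2 fun z hz ↦ ?_, fun z ↦ ?_⟩
  · obtain ⟨i, x, rfl⟩ := Module.DirectLimit.exists_of z
    rw [directLimitRestrictScalarsHom_of] at hz
    obtain ⟨j, hij, hx⟩ := Module.DirectLimit.of.zero_exact hz
    rw [← Module.DirectLimit.of_f (hij := hij), LinearMap.restrictScalars_apply, hx, map_zero]
  · obtain ⟨i, x, rfl⟩ := Module.DirectLimit.exists_of z
    exact ⟨_, directLimitRestrictScalarsHom_of f i x⟩

end DirectLimit

theorem IsDefinableClass.preimage_restrictScalars {𝒞 : Set (ModuleCat.{0} R)}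
    (h𝒞 : IsDefinableClass R 𝒞) :
    IsDefinableClass T ((ModuleCat.restrictScalars.{0} (algebraMap R T)).obj ⁻¹' 𝒞) := by
  obtain ⟨mem_of_iso, pi_mem, directLimit_mem, pure_mem⟩ := h𝒞
  let (X : Type) [AddCommGroup X] [Module T X] : Module R X := Module.compHom X (algebraMap R T)
  have (X : Type) [AddCommGroup X] [Module T X] : IsScalarTower R T X :=
    IsScalarTower.of_compHom R T X
  refine ⟨?_, ?_, ?_, ?_⟩
  · exact fun X Y ⟨e⟩ hX ↦
      mem_of_iso _ _ ⟨(ModuleCat.restrictScalars (algebraMap R T)).mapIso e⟩ hX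
  · exact fun ι G hG ↦ pi_mem ι _ hG
  · intro ι _ _ _ _ G _ _ f _ hG
    let e := LinearEquiv.ofBijective _ (directLimitRestrictScalarsHom_bijective (R := R) f)
    exact mem_of_iso _ _ ⟨e.toModuleIso⟩ (directLimit_mem ι G _ ‹_› hG)
  · exact fun A B _ _ _ _ f hf hB ↦ pure_mem A B _ hf.restrictScalars hB

end RestrictScalars

section FlatAlgebra

variable {R T : Type} [CommRing R] [CommRing T] [Algebra R T] [Module.Flat R T]
  {N : Type} [AddCommGroup N] [Module R N]
  (X : Type) [AddCommGroup X] [Module R X] [Module T X] [IsScalarTower R T X]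

theorem PureInjective.extV_one_iff_of_flat_algebra (hN : PureInjective R N) :
    extV R (ModuleCat.of R X) (ModuleCat.of R N) 1 ↔
      ∀ g : LinearMap.ker (freeCover T X) →ₗ[R] N, ∃ h : (X →₀ T) →ₗ[R] N,
        h ∘ₗ (LinearMap.ker (freeCover T X)).subtype.restrictScalars R = g := by
  have : Module.Flat R (X →₀ T) := Module.Flat.trans R T _
  exact extV_one_iff_forall_exists_comp_eq (K := LinearMap.ker (freeCover T X))
    (π := (freeCover T X).restrictScalars R)
    (i := (LinearMap.ker (freeCover T X)).subtype.restrictScalars R)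
    (Submodule.injective_subtype _) (exact_subtype_freeCover (A := T) (X := X))
    (Finsupp.linearCombination_id_surjective T X) (hN.extV_succ_of_flat 0)

variable (T) in
theorem PureInjective.extV_add_two_iff_of_flat_algebra (hN : PureInjective R N) (n : ℕ) :
    extV R (ModuleCat.of R X) (ModuleCat.of R N) (n + 2) ↔
      extV R (ModuleCat.of R (LinearMap.ker (freeCover T X))) (ModuleCat.of R N) (n + 1) := by
  have : Module.Flat R (X →₀ T) := Module.Flat.trans R T _
  exact extV_add_two_iff_extV_succ (π := (freeCover T X).restrictScalars R)
    (i := (LinearMap.ker (freeCover T X)).subtype.restrictScalars R)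
    (Submodule.injective_subtype _) (exact_subtype_freeCover (A := T) (X := X))
    (Finsupp.linearCombination_id_surjective T X) hN.extV_succ_of_flat n

end FlatAlgebra

section Localization

variable {R : Type} [CommRing R] {S : Submonoid R} {N : Type} [AddCommGroup N] [Module R N]

section Adjunction

variable {K : Type} [AddCommGroup K] [Module R K] [Module (Localization S) K]
  [IsScalarTower R (Localization S) K]

/-- The colocalization `Hom_R(R_S, -)` is right adjoint to restriction of scalars. -/
def colocEquiv : (K →ₗ[Localization S] Localization S →ₗ[R] N) ≃ (K →ₗ[R] N) where
  toFun f :=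
    { toFun := fun x ↦ f x 1
      map_add' := fun x y ↦ by rw [map_add, LinearMap.add_apply]
      map_smul' := fun r x ↦ by
        calc f (r • x) 1 = f (algebraMap R (Localization S) r • x) 1 := by rw [algebraMap_smul]
          _ = f x (algebraMap R (Localization S) r * 1) := by rw [map_smul]; rfl
          _ = r • f x 1 := by rw [← Algebra.smul_def, map_smul] }
  invFun g :=
    { toFun := fun x ↦ g ∘ₗ (LinearMap.toSpanSingleton (Localization S) K x).restrictScalars R
      map_add' := fun x y ↦ LinearMap.ext fun t ↦ by simp
      map_smul' := fun s x ↦ LinearMap.ext fun t ↦ by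
        calc g (t • s • x) = g ((s * t) • x) := by rw [smul_smul, mul_comm] }
  left_inv f := LinearMap.ext fun x ↦ LinearMap.ext fun t ↦ by
    calc f (t • x) 1 = f x (t * 1) := by rw [map_smul]; rfl
      _ = f x t := by rw [mul_one]
  right_inv g := LinearMap.ext fun x ↦ congrArg g (one_smul _ x)

theorem forall_exists_comp_eq_coloc_iff {P : Type} [AddCommGroup P] [Module R P]
    [Module (Localization S) P] [IsScalarTower R (Localization S) P]
    (j : K →ₗ[Localization S] P) :
    (∀ g : K →ₗ[Localization S] Localization S →ₗ[R] N,
      ∃ h : P →ₗ[Localization S] Localization S →ₗ[R] N, h ∘ₗ j = g) ↔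
    ∀ g : K →ₗ[R] N, ∃ h : P →ₗ[R] N, h ∘ₗ j.restrictScalars R = g :=
  colocEquiv.forall_congr fun g ↦ colocEquiv.exists_congr fun h ↦
    (colocEquiv (N := N)).apply_eq_iff_eq (x := h ∘ₗ j) (y := g).symm

end Adjunction

variable (X : Type) [AddCommGroup X] [Module R X] [Module (Localization S) X]
  [IsScalarTower R (Localization S) X]

theorem PureInjective.extV_coloc_iff (hN : PureInjective R N) (n : ℕ) :
    extV (Localization S) (ModuleCat.of _ X) (ModuleCat.of _ (Localization S →ₗ[R] N)) (n + 1) ↔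
      extV R (ModuleCat.of R X) (ModuleCat.of R N) (n + 1) := by
  have : Module.Flat R (Localization S) := IsLocalization.flat _ S
  induction n generalizing X with
  | zero =>
    exact extV_one_iff_forall_ker_freeCover.trans
      ((forall_exists_comp_eq_coloc_iff (S := S) (Submodule.subtype _)).trans
        (hN.extV_one_iff_of_flat_algebra X).symm)
  | succ n ih =>
    exact (extV_add_two_iff_ker_freeCover n).trans
      ((ih _).trans (hN.extV_add_two_iff_of_flat_algebra (Localization S) X n).symm)

variable (S) in
theorem PureInjective.extPerpAll_coloc (hN : PureInjective R N) :
    extPerpAll (Localization S) {ModuleCat.of _ (Localization S →ₗ[R] N)} =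
      (ModuleCat.restrictScalars.{0} (algebraMap R (Localization S))).obj ⁻¹'
        extPerpAll R {ModuleCat.of R N} := by
  ext X
  let : Module R X := Module.compHom X (algebraMap R (Localization S))
  have : IsScalarTower R (Localization S) X := IsScalarTower.of_compHom R (Localization S) X
  rw [Set.mem_preimage, mem_extPerpAll_singleton, mem_extPerpAll_singleton]
  exact forall_congr' (hN.extV_coloc_iff X)

end Localization

theorem stmt6_general (R : Type) [CommRing R] (N : Type) [AddCommGroup N] [Module R N]
    (hN : PureInjective R N) :
    (IsNoetherianRing R → extPerpAll R {ModuleCat.of R N} =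
      extPerpAll R {ModuleCat.of R
        (∀ m : {m : PrimeSpectrum R // m.asIdeal.IsMaximal},
          Localization.AtPrime m.1.asIdeal →ₗ[R] N)}) ∧
    (IsDefinableClass R (extPerpAll R {ModuleCat.of R N}) → ∀ S : Submonoid R,
      IsDefinableClass (Localization S)
        (extPerpAll (Localization S)
          {ModuleCat.of (Localization S) (Localization S →ₗ[R] N)})) := by
  refine ⟨fun _ ↦ extPerpAll_eq_extPerpAll_pi_atPrime hN, fun definable S ↦ ?_⟩
  rw [hN.extPerpAll_coloc S]
  exact definable.preimage_restrictScalars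

/-- for a commutative noetherian ring `R` and a pure-injective module `N`,
`{}^⊥N = {}^⊥(∏_𝔪 Hom_R(R_𝔪, N))`, and if `{}^⊥N` is definable, then so is the class
`{}^⊥(Hom_R(R_𝔪, N))` of `R_𝔪`-modules, for each maximal ideal `𝔪`. -/
theorem stmt6 (R : Type) [CommRing R] [IsNoetherianRing R]
    (N : Type) [AddCommGroup N] [Module R N] (hN : PureInjective R N) :
    extPerpAll R {ModuleCat.of R N} =
      extPerpAll R {ModuleCat.of R
        (∀ m : {m : PrimeSpectrum R // m.asIdeal.IsMaximal},
          Localization.AtPrime m.1.asIdeal →ₗ[R] N)} ∧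
    (IsDefinableClass R (extPerpAll R {ModuleCat.of R N}) →
      ∀ (m : PrimeSpectrum R), m.asIdeal.IsMaximal →
        IsDefinableClass (Localization.AtPrime m.asIdeal)
          (extPerpAll (Localization.AtPrime m.asIdeal)
            {ModuleCat.of (Localization.AtPrime m.asIdeal)
              (Localization.AtPrime m.asIdeal →ₗ[R] N)})) :=
  (stmt6_general R N hN).imp (· inferInstance) fun H definable m _ ↦
    H definable m.asIdeal.primeCompl
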